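/- arXiv:2507.17328 — 6 statements merged into one kernel-verified Lean document; each statement's English description precedes it below -/
import Mathlib

section
/- Let (X, d) be a metric space, let G, Ĝ : X → X be maps, and write G^[0] = id and G^[m+1] = G ∘ G^[m] (similarly for Ĝ). Let K ⊆ X, n ≥ 1 an integer, L ≥ 0, δ > 0, r > 0, and let S = { x ∈ X : there exist a ∈ K and l ∈ {0, …, n−1} with d(x, G^[l](a)) ≤ r } be the closed r-neighborhood of the first n iterates of K under G. Assume: (i) G is Lipschitz with constant L on S, i.e. d(G(x), G(y)) ≤ L·d(x,y) for all x,y ∈ S; (ii) d(G(x), Ĝ(x)) ≤ δ for all x ∈ S; (iii) δ · (1 + L + L² + … + L^{n−1}) ≤ r. Then for every a ∈ K, d(G^[n](a), Ĝ^[n](a)) ≤ δ · (1 + L + L² + … + L^{n−1}). -/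
open Finset in
/-- Rollout stability estimate: if `G` is `L`-Lipschitz on the closed `r`-neighborhood
`S` of the first `n` iterates of `K` under `G`, `Ĝ` is a `δ`-accurate one-step
approximation of `G` on `S`, and `δ·(1 + L + ⋯ + L^(n-1)) ≤ r`, then the `n`-fold
composition error on `K` is at most `δ·(1 + L + ⋯ + L^(n-1))`. -/
theorem rollout_stability_neighborhood
    {X : Type*} [MetricSpace X] (G Ghat : X → X) (K : Set X)
    (n : ℕ) (hn : 1 ≤ n) (L δ r : ℝ) (hL : 0 ≤ L) (hδ : 0 < δ) (hr : 0 < r)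
    (S : Set X)
    (hS : S = {x : X | ∃ a ∈ K, ∃ l : ℕ, l < n ∧ dist x (G^[l] a) ≤ r})
    (hLip : ∀ x ∈ S, ∀ y ∈ S, dist (G x) (G y) ≤ L * dist x y)
    (happrox : ∀ x ∈ S, dist (G x) (Ghat x) ≤ δ)
    (hgeom : δ * (∑ l ∈ range n, L ^ l) ≤ r) :
    ∀ a ∈ K, dist (G^[n] a) (Ghat^[n] a) ≤ δ * (∑ l ∈ range n, L ^ l) := by
  intro a ha
  have key : ∀ m : ℕ, m ≤ n →
      dist (G^[m] a) (Ghat^[m] a) ≤ δ * (∑ l ∈ range m, L ^ l) := by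
    intro m
    induction m with
    | zero => intro _; simp
    | succ m ih =>
      intro hm
      have h1 := ih (by omega)
      have hmono : ∑ l ∈ range m, L ^ l ≤ ∑ l ∈ range n, L ^ l :=
        Finset.sum_le_sum_of_subset_of_nonneg
          (Finset.range_subset_range.2 (by omega)) (fun i _ _ => pow_nonneg hL i)
      have h2 : dist (G^[m] a) (Ghat^[m] a) ≤ r :=
        h1.trans ((mul_le_mul_of_nonneg_left hmono hδ.le).trans hgeom)
      have hx : G^[m] a ∈ S := by
        rw [hS]
        exact ⟨a, ha, m, by omega, by simpa using hr.le⟩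
      have hy : Ghat^[m] a ∈ S := by
        rw [hS]
        exact ⟨a, ha, m, by omega, by rwa [dist_comm]⟩
      rw [Function.iterate_succ_apply', Function.iterate_succ_apply', geom_sum_succ]
      have h3 := dist_triangle (G (G^[m] a)) (G (Ghat^[m] a)) (Ghat (Ghat^[m] a))
      have h4 := hLip _ hx _ hy
      have h5 := happrox _ hy
      have h6 := mul_le_mul_of_nonneg_left h1 hL
      linarith
  exact key n le_rfl
end

section
/- Let X be a real normed vector space, let G, Ĝ : X → X be maps, and write Ĝ^[1] = Ĝ, Ĝ^[m+1] = Ĝ ∘ Ĝ^[m]. Let K ⊆ X, let n ≥ 1 be an integer, let ε > 0, and let M₁, …, M_n be positive reals with ε ≤ M_l for every l ∈ {1, …, n}. Assume: (i) ‖G(a)‖ ≤ M₁ for every a ∈ K; (ii) for every l ∈ {1, …, n−1} and every x ∈ X with ‖x‖ ≤ 2M_l, one has ‖G(x)‖ ≤ M_{l+1}; (iii) ‖G(x) − Ĝ(x)‖ ≤ ε for every x in the set K ∪ ⋃_{l=1}^{n−1} { x ∈ X : ‖x‖ ≤ 2M_l }. Then for every l ∈ {1, …, n} and every a ∈ K,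 ‖Ĝ^[l](a)‖ ≤ 2M_l. -/
/-- If `G` maps `K` into the ball of radius `M₁`, maps each ball of radius `2Mₗ`
into the ball of radius `M_{l+1}`, and `Ĝ` is uniformly `ε`-close to `G` on `K` and
on all these balls with `ε ≤ Mₗ` for every `l`, then the iterates of `Ĝ` starting
in `K` satisfy `‖Ĝ^[l](a)‖ ≤ 2Mₗ` for `1 ≤ l ≤ n`. -/
theorem approx_iterates_stay_in_balls
    {X : Type*} [NormedAddCommGroup X] [NormedSpace ℝ X]
    (G Ghat : X → X) (K : Set X) (n : ℕ) (hn : 1 ≤ n)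
    (ε : ℝ) (hε : 0 < ε) (M : ℕ → ℝ)
    (hMpos : ∀ l : ℕ, 1 ≤ l → l ≤ n → 0 < M l)
    (hεM : ∀ l : ℕ, 1 ≤ l → l ≤ n → ε ≤ M l)
    (hG₁ : ∀ a ∈ K, ‖G a‖ ≤ M 1)
    (hGball : ∀ l : ℕ, 1 ≤ l → l < n → ∀ x : X, ‖x‖ ≤ 2 * M l → ‖G x‖ ≤ M (l + 1))
    (happrox : ∀ x ∈ K ∪ ⋃ l ∈ Set.Ico 1 n, {x : X | ‖x‖ ≤ 2 * M l},
      ‖G x - Ghat x‖ ≤ ε) :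
    ∀ l : ℕ, 1 ≤ l → l ≤ n → ∀ a ∈ K, ‖Ghat^[l] a‖ ≤ 2 * M l := by
  have key : ∀ x : X, ‖Ghat x‖ ≤ ‖G x‖ + ‖G x - Ghat x‖ := by
    intro x
    have h := norm_sub_le (G x) (G x - Ghat x)
    rwa [sub_sub_cancel] at h
  intro l hl
  induction l, hl using Nat.le_induction with
  | base =>
    intro h1 a ha
    have e1 := happrox a (Or.inl ha)
    have e2 := hG₁ a ha
    have e3 := hεM 1 le_rfl h1
    have e4 := key a
    rw [Function.iterate_one]
    linarith
  | succ l hl ih =>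
    intro hln a ha
    have hb := ih (by omega) a ha
    have e1 := happrox (Ghat^[l] a)
      (Or.inr (Set.mem_biUnion (Set.mem_Ico.mpr ⟨hl, by omega⟩) hb))
    have e2 := hGball l hl (by omega) _ hb
    have e3 := hεM (l + 1) (by omega) hln
    have e4 := key (Ghat^[l] a)
    rw [Function.iterate_succ_apply']
    linarith
end

section
/- Let X be a real Banach space and Y a real normed vector space, and let j : Y → X be an injective continuous linear map which maps every bounded subset of Y to a relatively compact subset of X (a compact embedding). Let G : X → Y be Lipschitz on every compact subset of X, i.e. for every compact Q ⊆ X there exists L_Q ≥ 0 with ‖G(x) − G(y)‖_Y ≤ L_Q ‖x − y‖_X for all x, y ∈ Q. Let F be a family of maps from X to Y with the approximation property: for every compact Q ⊆ X and every η > 0 there exists Ĝ ∈ F such that ‖G(x) − Ĝ(x)‖_Y < η for all x ∈ Q. For a map H : X → Y define its j-iterates T_H^(1) = H and T_H^(m+1)(x) = H(j(T_H^(m)(x))). Then for every compact set K ⊆ X, every integer n ≥ 1 and every ε > 0, there exists Ĝ ∈ F such that ‖T_G^(n)(a) − T_Ĝ^(n)(a)‖_Y < ε for every a ∈ K. -/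
/-- The `j`-iterates of a map `H : X → Y`: `jIter j H 1 = H` and, for `m ≥ 1`,
`jIter j H (m+1) x = H (j (jIter j H m x))`, i.e. `H` is composed with its own
output viewed back in `X` through `j`. (The value at index `0` is junk.) -/
def jIter {X Y : Type*} (j : Y → X) (H : X → Y) : ℕ → X → Y
  | 0 => H
  | 1 => H
  | m + 2 => fun x => H (j (jIter j H (m + 1) x))

/-- A map that is Lipschitz on compact sets is bounded on compact sets. -/
lemma jIter_bdd_aux {X Y : Type*} [NormedAddCommGroup X] [NormedAddCommGroup Y] (G : X → Y)
    (hG : ∀ Q : Set X, IsCompact Q → ∃ L : ℝ, 0 ≤ L ∧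
      ∀ x ∈ Q, ∀ y ∈ Q, ‖G x - G y‖ ≤ L * ‖x - y‖)
    (Q : Set X) (hQ : IsCompact Q) : ∃ R : ℝ, ∀ x ∈ Q, ‖G x‖ ≤ R := by
  obtain ⟨L, hL, h⟩ := hG Q hQ
  have hlip : LipschitzOnWith L.toNNReal G Q := by
    refine LipschitzOnWith.of_dist_le_mul fun x hx y hy => ?_
    rw [dist_eq_norm, dist_eq_norm, Real.coe_toNNReal L hL]
    exact h x hx y hy
  exact hQ.exists_bound_of_continuousOn hlip.continuousOn

/-- Quantitative stability of the iterates, by induction. -/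
lemma jIter_stable_aux {X Y : Type*} [NormedAddCommGroup X] [NormedSpace ℝ X]
    [NormedAddCommGroup Y] [NormedSpace ℝ Y]
    (j : Y →L[ℝ] X)
    (hj_cpt : ∀ B : Set Y, Bornology.IsBounded B → IsCompact (closure (⇑j '' B)))
    (G : X → Y)
    (hG : ∀ Q : Set X, IsCompact Q → ∃ L : ℝ, 0 ≤ L ∧
      ∀ x ∈ Q, ∀ y ∈ Q, ‖G x - G y‖ ≤ L * ‖x - y‖)
    (K : Set X) (hK : IsCompact K) (m : ℕ) :
    (∃ R : ℝ, ∀ a ∈ K, ‖jIter (⇑j) G (m + 1) a‖ ≤ R) ∧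
    ∃ Q : Set X, IsCompact Q ∧ ∀ ε : ℝ, 0 < ε → ∃ η : ℝ, 0 < η ∧
      ∀ H : X → Y, (∀ x ∈ Q, ‖G x - H x‖ < η) →
        ∀ a ∈ K, ‖jIter (⇑j) G (m + 1) a - jIter (⇑j) H (m + 1) a‖ < ε := by
  induction m with
  | zero =>
    exact ⟨jIter_bdd_aux G hG K hK, K, hK, fun ε hε => ⟨ε, hε, fun H hH a ha => hH a ha⟩⟩
  | succ m ih =>
    obtain ⟨⟨R, hR⟩, Q, hQ, hst⟩ := ih
    have hC := hj_cpt (Metric.closedBall 0 (R + 1)) Metric.isBounded_closedBall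
    set C : Set X := closure (⇑j '' Metric.closedBall 0 (R + 1)) with hCdef
    have hmem : ∀ y : Y, ‖y‖ ≤ R + 1 → j y ∈ C := fun y hy =>
      subset_closure ⟨y, by simpa using hy, rfl⟩
    obtain ⟨L, hL, hLip⟩ := hG C hC
    obtain ⟨R', hR'⟩ := jIter_bdd_aux G hG C hC
    refine ⟨⟨R', fun a ha => hR' _ (hmem _ (by linarith [hR a ha]))⟩, Q ∪ C, hQ.union hC, ?_⟩
    intro ε hε
    have hM : 0 ≤ L * ‖j‖ := mul_nonneg hL (norm_nonneg _)
    have hδ : 0 < ε / (2 * (L * ‖j‖ + 1)) := by positivity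
    obtain ⟨η, hη, hηst⟩ := hst (min 1 (ε / (2 * (L * ‖j‖ + 1)))) (lt_min one_pos hδ)
    refine ⟨min η (ε / 2), lt_min hη (by linarith), ?_⟩
    intro H hH a ha
    have h1 := hηst H (fun x hx => (hH x (Or.inl hx)).trans_le (min_le_left _ _)) a ha
    change ‖G (j (jIter (⇑j) G (m + 1) a)) - H (j (jIter (⇑j) H (m + 1) a))‖ < ε
    have hRa := hR a ha
    generalize jIter (⇑j) G (m + 1) a = u at *
    generalize jIter (⇑j) H (m + 1) a = v at *
    have h2 : ‖u - v‖ < 1 := h1.trans_le (min_le_left _ _)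
    have h3 : ‖u - v‖ < ε / (2 * (L * ‖j‖ + 1)) := h1.trans_le (min_le_right _ _)
    have hv : ‖v‖ ≤ R + 1 := by
      have := norm_sub_norm_le v u
      rw [norm_sub_rev] at this
      linarith
    have hju := hmem u (by linarith)
    have hjv := hmem v hv
    have h4 : ‖G (j v) - H (j v)‖ < ε / 2 := (hH _ (Or.inr hjv)).trans_le (min_le_right _ _)
    have h5 : ‖G (j u) - G (j v)‖ ≤ L * ‖j‖ * ‖u - v‖ := by
      refine (hLip _ hju _ hjv).trans ?_
      rw [← map_sub, mul_assoc]
      exact mul_le_mul_of_nonneg_left (j.le_opNorm _) hL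
    have h6 : L * ‖j‖ * ‖u - v‖ ≤ ε / 2 := by
      rw [lt_div_iff₀ (by positivity)] at h3
      nlinarith [norm_nonneg (u - v)]
    have h7 := norm_sub_le_norm_sub_add_norm_sub (G (j u)) (G (j v)) (H (j v))
    linarith

/-- Given a compact embedding `j : Y → X`, a locally Lipschitz map `G : X → Y`, and a
family `F` of maps approximating `G` uniformly on compact sets, for every compact
`K ⊆ X`, `n ≥ 1` and `ε > 0` there is `Ĝ ∈ F` whose `n`-th `j`-iterate is uniformly
`ε`-close on `K` to the `n`-th `j`-iterate of `G`. -/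
theorem jIter_approx
    {X Y : Type*} [NormedAddCommGroup X] [NormedSpace ℝ X] [CompleteSpace X]
    [NormedAddCommGroup Y] [NormedSpace ℝ Y]
    (j : Y →L[ℝ] X) (hj_inj : Function.Injective j)
    (hj_cpt : ∀ B : Set Y, Bornology.IsBounded B → IsCompact (closure (⇑j '' B)))
    (G : X → Y)
    (hG : ∀ Q : Set X, IsCompact Q → ∃ L : ℝ, 0 ≤ L ∧
      ∀ x ∈ Q, ∀ y ∈ Q, ‖G x - G y‖ ≤ L * ‖x - y‖)
    (F : Set (X → Y))
    (hF : ∀ Q : Set X, IsCompact Q → ∀ η : ℝ, 0 < η →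
      ∃ Ghat ∈ F, ∀ x ∈ Q, ‖G x - Ghat x‖ < η)
    (K : Set X) (hK : IsCompact K) (n : ℕ) (hn : 1 ≤ n) (ε : ℝ) (hε : 0 < ε) :
    ∃ Ghat ∈ F, ∀ a ∈ K, ‖jIter (⇑j) G n a - jIter (⇑j) Ghat n a‖ < ε := by
  obtain ⟨m, rfl⟩ : ∃ m, n = m + 1 := ⟨n - 1, by omega⟩
  obtain ⟨-, Q, hQ, hst⟩ := jIter_stable_aux j hj_cpt G hG K hK m
  obtain ⟨η, hη, h⟩ := hst ε hε
  obtain ⟨H, hHF, hH⟩ := hF Q hQ η hη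
  exact ⟨H, hHF, h H hH⟩
end

section
/- Let X be a real Banach space and Y a real normed vector space, and let j : Y → X be an injective continuous linear map which maps every bounded subset of Y to a relatively compact subset of X. Let G : X → Y be Lipschitz on every compact subset of X, and let F be a family of maps from X to Y such that for every compact Q ⊆ X and every η > 0 there exists Ĝ ∈ F with ‖G(x) − Ĝ(x)‖_Y < η for all x ∈ Q. For a map H : X → Y define its j-iterates T_H^(1) = H and T_H^(m+1)(x) = H(j(T_H^(m)(x))). Let K ⊆ X be compact and suppose there is a map u : X → Y such that T_G^(n) converges to u uniformly on K, i.e. for every η > 0 there exists N with ‖T_G^(n)(a) − u(a)‖_Y < η for all n ≥ N and a ∈ K. Then for every ε > 0 there exist an integer n ≥ 1 and a map Ĝ ∈ F such that ‖T_Ĝ^(n)(a) − u(a)‖_Y < ε for every a ∈ K. -/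
theorem jIter_aux_bdd
    {X Y : Type*} [NormedAddCommGroup X] [NormedSpace ℝ X]
    [NormedAddCommGroup Y] [NormedSpace ℝ Y]
    (G : X → Y)
    (hG : ∀ Q : Set X, IsCompact Q → ∃ L : ℝ, 0 ≤ L ∧
      ∀ x ∈ Q, ∀ y ∈ Q, ‖G x - G y‖ ≤ L * ‖x - y‖)
    (Q : Set X) (hQ : IsCompact Q) : Bornology.IsBounded (G '' Q) := by
  obtain ⟨L, hL, h⟩ := hG Q hQ
  have hl : LipschitzOnWith ⟨L, hL⟩ G Q := by
    apply LipschitzOnWith.of_dist_le_mul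
    intro x hx y hy
    rw [dist_eq_norm, dist_eq_norm]
    exact h x hx y hy
  exact (hQ.image_of_continuousOn hl.continuousOn).isBounded

theorem jIter_aux_iter_bdd
    {X Y : Type*} [NormedAddCommGroup X] [NormedSpace ℝ X]
    [NormedAddCommGroup Y] [NormedSpace ℝ Y]
    (j : Y →L[ℝ] X)
    (hj_cpt : ∀ B : Set Y, Bornology.IsBounded B → IsCompact (closure (⇑j '' B)))
    (G : X → Y)
    (hG : ∀ Q : Set X, IsCompact Q → ∃ L : ℝ, 0 ≤ L ∧
      ∀ x ∈ Q, ∀ y ∈ Q, ‖G x - G y‖ ≤ L * ‖x - y‖)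
    (K : Set X) (hK : IsCompact K) (m : ℕ) :
    Bornology.IsBounded (jIter (⇑j) G (m + 1) '' K) := by
  induction m with
  | zero => exact jIter_aux_bdd G hG K hK
  | succ m ih =>
    refine (jIter_aux_bdd G hG _ (hj_cpt _ ih)).subset ?_
    rintro _ ⟨a, ha, rfl⟩
    exact ⟨j (jIter (⇑j) G (m + 1) a),
      subset_closure ⟨_, ⟨a, ha, rfl⟩, rfl⟩, rfl⟩

theorem jIter_aux_stable
    {X Y : Type*} [NormedAddCommGroup X] [NormedSpace ℝ X]
    [NormedAddCommGroup Y] [NormedSpace ℝ Y]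
    (j : Y →L[ℝ] X)
    (hj_cpt : ∀ B : Set Y, Bornology.IsBounded B → IsCompact (closure (⇑j '' B)))
    (G : X → Y)
    (hG : ∀ Q : Set X, IsCompact Q → ∃ L : ℝ, 0 ≤ L ∧
      ∀ x ∈ Q, ∀ y ∈ Q, ‖G x - G y‖ ≤ L * ‖x - y‖)
    (K : Set X) (hK : IsCompact K) (m : ℕ) :
    ∀ δ : ℝ, 0 < δ → ∃ Q : Set X, IsCompact Q ∧ ∃ η : ℝ, 0 < η ∧
      ∀ H : X → Y, (∀ x ∈ Q, ‖G x - H x‖ < η) → ∀ a ∈ K,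
        ‖jIter (⇑j) G (m + 1) a - jIter (⇑j) H (m + 1) a‖ < δ := by
  induction m with
  | zero => exact fun δ hδ => ⟨K, hK, δ, hδ, fun H hH a ha => hH a ha⟩
  | succ m ih =>
    intro δ hδ
    have hB := (jIter_aux_iter_bdd j hj_cpt G hG K hK m).cthickening (δ := 1)
    have hQ1 := hj_cpt _ hB
    obtain ⟨L, hL, hLip⟩ := hG _ hQ1
    have hc : 0 ≤ L * ‖j‖ := by positivity
    obtain ⟨Q0, hQ0, η0, hη0, h0⟩ := ih (min 1 (δ / 2 / (L * ‖j‖ + 1)))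
      (lt_min one_pos (by positivity))
    refine ⟨_, hQ0.union hQ1, min η0 (δ / 2), lt_min hη0 (by positivity), ?_⟩
    intro H hH a ha
    have h1 := h0 H (fun x hx => (hH x (Or.inl hx)).trans_le (min_le_left _ _)) a ha
    set p := jIter (⇑j) G (m + 1) a with hp
    set q := jIter (⇑j) H (m + 1) a with hq
    have hpm : p ∈ jIter (⇑j) G (m + 1) '' K := ⟨a, ha, rfl⟩
    have hjp : j p ∈ closure (⇑j '' Metric.cthickening 1 (jIter (⇑j) G (m + 1) '' K)) :=
      subset_closure ⟨p, Metric.self_subset_cthickening _ hpm, rfl⟩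
    have hjq : j q ∈ closure (⇑j '' Metric.cthickening 1 (jIter (⇑j) G (m + 1) '' K)) := by
      refine subset_closure ⟨q, Metric.mem_cthickening_of_dist_le q p _ _ hpm ?_, rfl⟩
      rw [dist_comm, dist_eq_norm]
      exact h1.le.trans (min_le_left _ _)
    have h2 := (hH (j q) (Or.inr hjq)).trans_le (min_le_right _ _)
    have h3 := hLip _ hjp _ hjq
    have h4 : ‖j p - j q‖ ≤ ‖j‖ * ‖p - q‖ := by
      rw [← map_sub]; exact j.le_opNorm _
    have h5 : ‖p - q‖ * (L * ‖j‖ + 1) ≤ δ / 2 :=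
      (le_div_iff₀ (by positivity)).1 (h1.le.trans (min_le_right _ _))
    have h6 : L * ‖j p - j q‖ ≤ L * (‖j‖ * ‖p - q‖) := mul_le_mul_of_nonneg_left h4 hL
    have h7 := norm_sub_le_norm_sub_add_norm_sub (G (j p)) (G (j q)) (H (j q))
    have h8 := norm_nonneg (p - q)
    change ‖G (j p) - H (j q)‖ < δ
    nlinarith

/-- Given a compact embedding `j : Y → X`, a locally Lipschitz map `G : X → Y`
approximable uniformly on compact sets by members of a family `F`, and a map `u`
which is the uniform limit on a compact set `K` of the `j`-iterates of `G`, for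
every `ε > 0` some `n`-th `j`-iterate of some `Ĝ ∈ F` is uniformly `ε`-close to
`u` on `K`. -/
theorem jIter_approx_limit
    {X Y : Type*} [NormedAddCommGroup X] [NormedSpace ℝ X] [CompleteSpace X]
    [NormedAddCommGroup Y] [NormedSpace ℝ Y]
    (j : Y →L[ℝ] X) (hj_inj : Function.Injective j)
    (hj_cpt : ∀ B : Set Y, Bornology.IsBounded B → IsCompact (closure (⇑j '' B)))
    (G : X → Y)
    (hG : ∀ Q : Set X, IsCompact Q → ∃ L : ℝ, 0 ≤ L ∧
      ∀ x ∈ Q, ∀ y ∈ Q, ‖G x - G y‖ ≤ L * ‖x - y‖)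
    (F : Set (X → Y))
    (hF : ∀ Q : Set X, IsCompact Q → ∀ η : ℝ, 0 < η →
      ∃ Ghat ∈ F, ∀ x ∈ Q, ‖G x - Ghat x‖ < η)
    (K : Set X) (hK : IsCompact K) (u : X → Y)
    (hu : ∀ η : ℝ, 0 < η → ∃ N : ℕ, ∀ n : ℕ, N ≤ n → ∀ a ∈ K,
      ‖jIter (⇑j) G n a - u a‖ < η)
    (ε : ℝ) (hε : 0 < ε) :
    ∃ n : ℕ, 1 ≤ n ∧ ∃ Ghat ∈ F, ∀ a ∈ K,
      ‖jIter (⇑j) Ghat n a - u a‖ < ε := by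
  obtain ⟨N, hN⟩ := hu (ε / 2) (by positivity)
  obtain ⟨Q, hQ, η, hη, h⟩ :=
    jIter_aux_stable j hj_cpt G hG K hK N (ε / 2) (by positivity)
  obtain ⟨H, hHF, hH⟩ := hF Q hQ η hη
  refine ⟨N + 1, by omega, H, hHF, fun a ha => ?_⟩
  have h1 := hN (N + 1) (by omega) a ha
  have h2 := h H hH a ha
  rw [norm_sub_rev] at h2
  have h3 := norm_sub_le_norm_sub_add_norm_sub (jIter (⇑j) H (N + 1) a)
    (jIter (⇑j) G (N + 1) a) (u a)
  linarith
end

section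
/- Let A be a metric space and let U be a (possibly non-unital) normed ring, so that ‖x·y‖ ≤ ‖x‖‖y‖, which is also a real normed vector space. Fix φ, ψ ∈ U with ‖φ‖ ≥ 1 and ‖ψ‖ ≥ 1, let K ⊆ A × U, let ε > 0, and let L̂₂ ≥ 1. Let G₁, Ĝ₁, G₂, Ĝ₂ : A × U → U be maps such that for every a ∈ A the map g ↦ Ĝ₂(a,g) is Lipschitz on U with constant L̂₂. Define the set K̃ = { (a, G₁(a,g)·φ + g·ψ) : (a,g) ∈ K } and define G(a,g) = G₁(a,g)·φ + G₂(a, G₁(a,g)·φ + g·ψ)·ψ and Ĝ(a,g) = Ĝ₁(a,g)·φ + Ĝ₂(a, Ĝ₁(a,g)·φ + g·ψ)·ψ. Assume: (i) ‖G₂(a,h) − Ĝ₂(a,h)‖ < ε / (3‖ψ‖) for every (a,h) ∈ K̃; (ii) ‖G₁(a,g) − Ĝ₁(a,g)‖ < ε / (3 L̂₂ ‖φ‖ ‖ψ‖) for every (a,g) ∈ K. Then ‖G(a,g) − Ĝ(a,g)‖ < ε for every (a,g) ∈ K. -/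
/-- Three-epsilon estimate for the alternating Schwarz base operator: if the
approximate local solvers `Ĝ₂` (globally `L̂₂`-Lipschitz in its second argument)
and `Ĝ₁` satisfy `‖G₂ − Ĝ₂‖ < ε/(3‖ψ‖)` on the set `K̃` of intermediate inputs and
`‖G₁ − Ĝ₁‖ < ε/(3 L̂₂ ‖φ‖ ‖ψ‖)` on `K`, then the glued operators satisfy
`‖G − Ĝ‖ < ε` on `K`. -/
theorem schwarz_base_operator_approx
    {A U : Type*} [MetricSpace A] [NonUnitalNormedRing U] [NormedSpace ℝ U]
    (φ ψ : U) (hφ : 1 ≤ ‖φ‖) (hψ : 1 ≤ ‖ψ‖)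
    (K : Set (A × U)) (ε : ℝ) (hε : 0 < ε) (L₂ : ℝ) (hL₂ : 1 ≤ L₂)
    (G₁ Ghat₁ G₂ Ghat₂ : A × U → U)
    (hGhat₂Lip : ∀ (a : A) (g₁ g₂ : U),
      ‖Ghat₂ (a, g₁) - Ghat₂ (a, g₂)‖ ≤ L₂ * ‖g₁ - g₂‖)
    (G Ghat : A × U → U)
    (hGdef : ∀ (a : A) (g : U),
      G (a, g) = G₁ (a, g) * φ + G₂ (a, G₁ (a, g) * φ + g * ψ) * ψ)
    (hGhatdef : ∀ (a : A) (g : U),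
      Ghat (a, g) = Ghat₁ (a, g) * φ + Ghat₂ (a, Ghat₁ (a, g) * φ + g * ψ) * ψ)
    (h₂ : ∀ q ∈ (fun p : A × U => (p.1, G₁ p * φ + p.2 * ψ)) '' K,
      ‖G₂ q - Ghat₂ q‖ < ε / (3 * ‖ψ‖))
    (h₁ : ∀ p ∈ K, ‖G₁ p - Ghat₁ p‖ < ε / (3 * L₂ * ‖φ‖ * ‖ψ‖)) :
    ∀ p ∈ K, ‖G p - Ghat p‖ < ε := by
  rintro ⟨a, g⟩ hp
  have e2 := h₂ _ ⟨(a, g), hp, rfl⟩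
  have e1 := h₁ _ hp
  simp only at e2
  rw [hGdef, hGhatdef]
  set x := G₁ (a, g) * φ + g * ψ with hx
  set y := Ghat₁ (a, g) * φ + g * ψ with hy
  have hφ0 : 0 < ‖φ‖ := by linarith
  have hψ0 : 0 < ‖ψ‖ := by linarith
  have hL0 : 0 < L₂ := by linarith
  rw [lt_div_iff₀ (by positivity)] at e1 e2
  have hxy : x - y = (G₁ (a, g) - Ghat₁ (a, g)) * φ := by
    rw [hx, hy, sub_mul]; abel
  have e3 := hGhat₂Lip a x y
  rw [hxy] at e3
  have key : G₁ (a, g) * φ + G₂ (a, x) * ψ - (Ghat₁ (a, g) * φ + Ghat₂ (a, y) * ψ)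
      = (G₁ (a, g) - Ghat₁ (a, g)) * φ + (G₂ (a, x) - Ghat₂ (a, x)) * ψ
        + (Ghat₂ (a, x) - Ghat₂ (a, y)) * ψ := by
    simp only [sub_mul]; abel
  rw [key]
  have n1 := norm_mul_le (G₁ (a, g) - Ghat₁ (a, g)) φ
  have n2 := norm_mul_le (G₂ (a, x) - Ghat₂ (a, x)) ψ
  have n3 := norm_mul_le (Ghat₂ (a, x) - Ghat₂ (a, y)) ψ
  have n4 := norm_add₃_le (a := (G₁ (a, g) - Ghat₁ (a, g)) * φ)
    (b := (G₂ (a, x) - Ghat₂ (a, x)) * ψ) (c := (Ghat₂ (a, x) - Ghat₂ (a, y)) * ψ)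
  have m3 : ‖Ghat₂ (a, x) - Ghat₂ (a, y)‖ * ‖ψ‖
      ≤ L₂ * (‖G₁ (a, g) - Ghat₁ (a, g)‖ * ‖φ‖) * ‖ψ‖ := by
    refine mul_le_mul_of_nonneg_right (e3.trans ?_) hψ0.le
    exact mul_le_mul_of_nonneg_left n1 hL0.le
  have hLψ : 1 ≤ L₂ * ‖ψ‖ := one_le_mul_of_one_le_of_one_le hL₂ hψ
  have m1 : ‖G₁ (a, g) - Ghat₁ (a, g)‖ * ‖φ‖
      ≤ ‖G₁ (a, g) - Ghat₁ (a, g)‖ * ‖φ‖ * (L₂ * ‖ψ‖) :=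
    le_mul_of_one_le_right (by positivity) hLψ
  linarith
end

section
/- Let X be a real Banach space and Y a real normed vector space, and let j : Y → X be an injective continuous linear map which maps every bounded subset of Y to a relatively compact subset of X. Let G : X → X be Lipschitz on every compact subset of X. Let (M_δ)_{δ ∈ (0,1]} be a family of continuous linear maps M_δ : X → Y satisfying: (i) for every compact Q ⊆ X, every η > 0 and every δ̄ ∈ (0,1], there exists δ₀ ∈ (0, δ̄] with ‖j(M_{δ₀}(x)) − x‖_X < η for all x ∈ Q; (ii) for every compact Q ⊆ X and every δ̄ ∈ (0,1], the set Q ∪ ⋃_{δ ∈ (0,δ̄]} { j(M_δ(x)) : x ∈ Q } has compact closure in X. Let F be a family of maps from X to Y such that for every map H : X → Y which is Lipschitz on every compact subset of X, every compact Q ⊆ X and every η > 0, there exists Ĝ ∈ F with ‖H(x) − Ĝ(x)‖_Y < η for all x ∈ Q. For Ĝ ∈ F define U_Ĝ^(1)(x) = j(Ĝ(x)) and U_Ĝ^(m+1)(x) = j(Ĝ(U_Ĝ^(m)(x))), and let G^(m) denote the m-fold composition of G with itself. Then for every compact K ⊆ X, every integer n ≥ 1 and every ε > 0, there exists Ĝ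 ∈ F such that ‖G^(n)(a) − U_Ĝ^(n)(a)‖_X < ε for every a ∈ K. -/
/-- The rollout of a map `Ghat : X → Y` through an embedding `j : Y → X`:
`rollout j Ghat 1 x = j (Ghat x)` and `rollout j Ghat (m+1) x = j (Ghat (rollout j Ghat m x))`. -/
def rollout {X Y : Type*} (j : Y → X) (Ghat : X → Y) : ℕ → X → X
  | 0 => fun x => x
  | m + 1 => fun x => j (Ghat (rollout j Ghat m x))

/-- A map Lipschitz on a compact set sends it to a compact set. -/
lemma image_compact_of_lip {X : Type*} [NormedAddCommGroup X] (G : X → X)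
    (hG : ∀ Q : Set X, IsCompact Q → ∃ L : ℝ, 0 ≤ L ∧
      ∀ x ∈ Q, ∀ y ∈ Q, ‖G x - G y‖ ≤ L * ‖x - y‖) (Q : Set X) (hQ : IsCompact Q) :
    IsCompact (G '' Q) := by
  obtain ⟨L, hL, h⟩ := hG Q hQ
  apply hQ.image_of_continuousOn
  have : LipschitzOnWith ⟨L, hL⟩ G Q := by
    apply LipschitzOnWith.of_dist_le_mul
    intro x hx y hy
    rw [dist_eq_norm, dist_eq_norm]
    exact h x hx y hy
  exact this.continuousOn

/-- Inductive stability estimate for rollouts. -/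
lemma rollout_aux
    {X Y : Type*} [NormedAddCommGroup X] [NormedSpace ℝ X]
    [NormedAddCommGroup Y] [NormedSpace ℝ Y]
    (j : Y →L[ℝ] X)
    (hj_cpt : ∀ B : Set Y, Bornology.IsBounded B → IsCompact (closure (⇑j '' B)))
    (G : X → X)
    (hG : ∀ Q : Set X, IsCompact Q → ∃ L : ℝ, 0 ≤ L ∧
      ∀ x ∈ Q, ∀ y ∈ Q, ‖G x - G y‖ ≤ L * ‖x - y‖)
    (M : ℝ → X →L[ℝ] Y)
    (hM₂ : ∀ Q : Set X, IsCompact Q → ∀ δbar ∈ Set.Ioc (0 : ℝ) 1,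
      IsCompact (closure (Q ∪ ⋃ δ ∈ Set.Ioc (0 : ℝ) δbar, (fun x => j (M δ x)) '' Q)))
    (K : Set X) (hK : IsCompact K) (m : ℕ) :
    ∃ S Q : Set X, IsCompact S ∧ IsCompact Q ∧ ∀ ε : ℝ, 0 < ε → ∃ η : ℝ, 0 < η ∧
      ∀ δ ∈ Set.Ioc (0 : ℝ) 1, ∀ Ghat : X → Y,
        (∀ x ∈ Q, ‖j (M δ (G x)) - G x‖ < η ∧ ‖M δ (G x) - Ghat x‖ < η) →
        ∀ a ∈ K, G^[m] a ∈ S ∧ rollout (⇑j) Ghat m a ∈ S ∧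
          ‖G^[m] a - rollout (⇑j) Ghat m a‖ < ε := by
  induction m with
  | zero =>
    refine ⟨K, ∅, hK, isCompact_empty, fun ε hε => ⟨1, one_pos, ?_⟩⟩
    intro δ _ Ghat _ a ha
    simpa [rollout, ha] using hε
  | succ m ih =>
    obtain ⟨S, Q, hS, hQ, h⟩ := ih
    have hB := hj_cpt (Metric.closedBall 0 1) Metric.isBounded_closedBall
    have hT := hM₂ (G '' S) (image_compact_of_lip G hG S hS) 1 ⟨one_pos, le_rfl⟩
    refine ⟨_, Q ∪ S, (hT.prod hB).image (continuous_fst.add continuous_snd),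
      hQ.union hS, fun ε hε => ?_⟩
    obtain ⟨L, hL, hLip⟩ := hG S hS
    obtain ⟨η, hη, h⟩ := h (ε / (2 * (L + 1))) (by positivity)
    have hj0 := norm_nonneg j
    refine ⟨min η (min 1 (ε / (4 * (1 + ‖j‖)))), by positivity, ?_⟩
    intro δ hδ Ghat hGh a ha
    obtain ⟨h1, h2, h3⟩ := h δ hδ Ghat (fun x hx =>
      ⟨(hGh x (Or.inl hx)).1.trans_le (min_le_left _ _),
       (hGh x (Or.inl hx)).2.trans_le (min_le_left _ _)⟩) a ha
    set g := G^[m] a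
    have hr : rollout (⇑j) Ghat (m + 1) a = j (Ghat (rollout (⇑j) Ghat m a)) := rfl
    rw [Function.iterate_succ_apply', hr]
    change G g ∈ _ ∧ _ ∧ ‖G g - _‖ < _
    set u := rollout (⇑j) Ghat m a
    obtain ⟨e1, e2⟩ := hGh u (Or.inr h2)
    have e3 : ‖M δ (G u) - Ghat u‖ ≤ 1 :=
      e2.le.trans ((min_le_right _ _).trans (min_le_left _ _))
    have c := (min_le_right η (min 1 (ε / (4 * (1 + ‖j‖))))).trans (min_le_right _ _)
    have e1' := e1.trans_le c
    have e2' := e2.trans_le c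
    refine ⟨⟨(G g, 0), ⟨subset_closure (Or.inl ⟨g, h1, rfl⟩),
        subset_closure ⟨0, by simp, by simp⟩⟩, by simp⟩,
      ⟨(j (M δ (G u)), j (Ghat u - M δ (G u))), ⟨subset_closure (Or.inr ?_),
        subset_closure ⟨_, ?_, rfl⟩⟩, by simp⟩, ?_⟩
    · simp only [Set.mem_iUnion]
      exact ⟨δ, hδ, G u, ⟨u, h2, rfl⟩, rfl⟩
    · rw [mem_closedBall_zero_iff, norm_sub_rev]
      exact e3
    · have k1 := hLip g h1 u h2
      have k2 : L * ‖g - u‖ ≤ ε / 2 := by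
        calc L * ‖g - u‖ ≤ (L + 1) * (ε / (2 * (L + 1))) := by gcongr; linarith
          _ = ε / 2 := by field_simp
      have k3 : ‖j (M δ (G u) - Ghat u)‖ ≤ ‖j‖ * (ε / (4 * (1 + ‖j‖))) :=
        (j.le_opNorm _).trans (by gcongr)
      have k4 : ε / (4 * (1 + ‖j‖)) + ‖j‖ * (ε / (4 * (1 + ‖j‖))) = ε / 4 := by
        field_simp
      have k5 : G g - j (Ghat u) = (G g - G u) - (j (M δ (G u)) - G u)
          + j (M δ (G u) - Ghat u) := by
        rw [map_sub]; abel
      rw [k5]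
      have k6 := norm_add_le ((G g - G u) - (j (M δ (G u)) - G u)) (j (M δ (G u) - Ghat u))
      have k7 := norm_sub_le (G g - G u) (j (M δ (G u)) - G u)
      linarith

/-- Approximation of the `n`-fold self-composition of a locally Lipschitz map
`G : X → X` by rollouts of elements of a family `F` of maps `X → Y`, where
`j : Y → X` is a compact embedding, `(M_δ)` is an abstract mollification family,
and `F` approximates every locally Lipschitz map `X → Y` uniformly on compact sets. -/
theorem selfcomp_approx_by_rollout
    {X Y : Type*} [NormedAddCommGroup X] [NormedSpace ℝ X] [CompleteSpace X]
    [NormedAddCommGroup Y] [NormedSpace ℝ Y]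
    (j : Y →L[ℝ] X) (hj_inj : Function.Injective j)
    (hj_cpt : ∀ B : Set Y, Bornology.IsBounded B → IsCompact (closure (⇑j '' B)))
    (G : X → X)
    (hG : ∀ Q : Set X, IsCompact Q → ∃ L : ℝ, 0 ≤ L ∧
      ∀ x ∈ Q, ∀ y ∈ Q, ‖G x - G y‖ ≤ L * ‖x - y‖)
    (M : ℝ → X →L[ℝ] Y)
    (hM₁ : ∀ Q : Set X, IsCompact Q → ∀ η : ℝ, 0 < η → ∀ δbar ∈ Set.Ioc (0 : ℝ) 1,
      ∃ δ₀ ∈ Set.Ioc (0 : ℝ) δbar, ∀ x ∈ Q, ‖j (M δ₀ x) - x‖ < η)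
    (hM₂ : ∀ Q : Set X, IsCompact Q → ∀ δbar ∈ Set.Ioc (0 : ℝ) 1,
      IsCompact (closure (Q ∪ ⋃ δ ∈ Set.Ioc (0 : ℝ) δbar, (fun x => j (M δ x)) '' Q)))
    (F : Set (X → Y))
    (hF : ∀ H : X → Y,
      (∀ Q : Set X, IsCompact Q → ∃ L : ℝ, 0 ≤ L ∧
        ∀ x ∈ Q, ∀ y ∈ Q, ‖H x - H y‖ ≤ L * ‖x - y‖) →
      ∀ Q : Set X, IsCompact Q → ∀ η : ℝ, 0 < η →
        ∃ Ghat ∈ F, ∀ x ∈ Q, ‖H x - Ghat x‖ < η)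
    (K : Set X) (hK : IsCompact K) (n : ℕ) (hn : 1 ≤ n) (ε : ℝ) (hε : 0 < ε) :
    ∃ Ghat ∈ F, ∀ a ∈ K, ‖G^[n] a - rollout (⇑j) Ghat n a‖ < ε := by
  obtain ⟨S, Q, hS, hQ, h⟩ := rollout_aux j hj_cpt G hG M hM₂ K hK n
  obtain ⟨η, hη, h⟩ := h ε hε
  obtain ⟨δ, hδ, hd⟩ := hM₁ (G '' Q) (image_compact_of_lip G hG Q hQ) η hη 1 ⟨one_pos, le_rfl⟩
  obtain ⟨Ghat, hGF, hGh⟩ := hF (fun x => M δ (G x)) (by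
    intro P hP
    obtain ⟨L, hL, hLip⟩ := hG P hP
    refine ⟨‖M δ‖ * L, by positivity, fun x hx y hy => ?_⟩
    rw [← map_sub, mul_assoc]
    exact ((M δ).le_opNorm _).trans
      (mul_le_mul_of_nonneg_left (hLip x hx y hy) (norm_nonneg _))) Q hQ η hη
  exact ⟨Ghat, hGF, fun a ha => (h δ hδ Ghat
    (fun x hx => ⟨hd _ ⟨x, hx, rfl⟩, hGh x hx⟩) a ha).2.2⟩
end
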